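/- arXiv:2501.11559 — 2 statements merged into one kernel-verified Lean document; each statement's English description precedes it below -/
import Mathlib

section
/- For a partition $\Lambda$ with at most $n+1$ parts, the Schur polynomial satisfies the branching rule $s_\Lambda(x_1,\ldots,x_n,x_{n+1}) = \sum_{M} x_{n+1}^{|\Lambda| - |M|} s_M(x_1,\ldots,x_n)$, where the sum runs over all partitions $M$ with at most $n$ parts such that $\Lambda/M$ is a horizontal strip. -/
/- STATEMENT 1: Branching rule for Schur polynomials: for a partition Λ with at most n+1
   parts, s_Λ(x₁,…,x_{n+1}) = ∑_M x_{n+1}^{|Λ|-|M|} s_M(x₁,…,xₙ), the sum over partitions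
   M with at most n parts such that Λ/M is a horizontal strip (λᵢ ≥ μᵢ ≥ λ_{i+1}).

   Schur polynomials are defined by the Jacobi–Trudi formula
   s_Λ = det(h_{λᵢ - i + j})_{1≤i,j≤ℓ}, where h_k is the complete homogeneous symmetric
   polynomial (of the chosen set S of variables) and h_k = 0 for k < 0. -/

noncomputable section
open MvPolynomial

/-- The complete homogeneous symmetric polynomial of degree `k` in the variables `Xᵢ`,
`i ∈ S`. -/
def hCompl (N : ℕ) (S : Finset (Fin N)) (k : ℕ) : MvPolynomial (Fin N) ℚ :=
  ∑ d ∈ (Finset.Icc (fun _ => 0) (fun i => if i ∈ S then k else 0) :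
      Finset (Fin N → ℕ)).filter (fun d => ∑ i, d i = k),
    ∏ i, (X i) ^ d i

/-- `h_m` for `m ∈ ℤ`, with `h_m = 0` for `m < 0`. -/
def hComplZ (N : ℕ) (S : Finset (Fin N)) (m : ℤ) : MvPolynomial (Fin N) ℚ :=
  if 0 ≤ m then hCompl N S m.toNat else 0

/-- The Schur polynomial of a partition `Λ` (given by its `l` parts) in the variables
`Xᵢ, i ∈ S`, via the Jacobi–Trudi determinant. -/
def schurJT (N : ℕ) (S : Finset (Fin N)) {l : ℕ} (Λ : Fin l → ℕ) : MvPolynomial (Fin N) ℚ :=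
  Matrix.det (Matrix.of fun i j : Fin l => hComplZ N S ((Λ i : ℤ) + (j : ℤ) - (i : ℤ)))

/-- Generating series of the complete homogeneous symmetric polynomials in `Xᵢ`, `i ∈ S`. -/
def complGen (N : ℕ) (S : Finset (Fin N)) : PowerSeries (MvPolynomial (Fin N) ℚ) :=
  ∏ i ∈ S, PowerSeries.mk fun k => X i ^ k

lemma hCompl_eq_coeff_complGen (N : ℕ) (S : Finset (Fin N)) (k : ℕ) :
    hCompl N S k = PowerSeries.coeff k (complGen N S) := by
  classical
  rw [hCompl, complGen, PowerSeries.coeff_prod]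
  refine Finset.sum_equiv Finsupp.equivFunOnFinite.symm (fun d => ?_) (fun d hd => ?_)
  · rw [Finset.mem_filter, Finset.mem_Icc, Finset.mem_finsuppAntidiag]
    constructor
    · rintro ⟨⟨-, hd⟩, hsum⟩
      have hzero : ∀ i, i ∉ S → d i = 0 := fun i hi => by simpa [hi] using hd i
      refine ⟨?_, fun i hi => ?_⟩
      · rw [← hsum]
        exact Finset.sum_subset (Finset.subset_univ S) fun i _ hi => hzero i hi
      · by_contra h
        exact Finsupp.mem_support_iff.1 hi (hzero i h)
    · rintro ⟨hsum, hsupp⟩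
      have hzero : ∀ i, i ∉ S → d i = 0 := fun i hi => by
        by_contra h
        exact hi (hsupp (Finsupp.mem_support_iff.2 h))
      refine ⟨⟨fun i => Nat.zero_le _, fun i => ?_⟩, ?_⟩
      · by_cases hi : i ∈ S
        · simp only [hi, if_true]
          rw [← hsum]
          exact Finset.single_le_sum (f := d) (fun _ _ => Nat.zero_le _) hi
        · simp [hi, hzero i hi]
      · rw [← hsum]
        exact (Finset.sum_subset (Finset.subset_univ S) fun i _ hi => hzero i hi).symm
  · have hzero : ∀ i, i ∉ S → d i = 0 := fun i hi => by
      simpa [hi] using (Finset.mem_Icc.1 (Finset.mem_filter.1 hd).1).2 i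
    simp only [PowerSeries.coeff_mk]
    exact (Finset.prod_subset (Finset.subset_univ S) fun i _ hi => by
      simp [hzero i hi]).symm

lemma mk_pow_mul_one_sub {R : Type*} [CommRing R] (x : R) :
    (1 - PowerSeries.C x * PowerSeries.X) * (PowerSeries.mk fun k => x ^ k) = 1 := by
  ext (_ | k)
  · simp [sub_mul]
  · simp [sub_mul, mul_assoc, PowerSeries.coeff_succ_X_mul, pow_succ', PowerSeries.coeff_one]

/-- A linear recurrence applied to the `h_m` is a coefficient of the product of its
characteristic polynomial with the generating series. -/
lemma sum_coeff_mul_hComplZ (N : ℕ) (S : Finset (Fin N))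
    (P : Polynomial (MvPolynomial (Fin N) ℚ)) (d : ℕ) (hP : P.natDegree ≤ d) (m : ℤ) :
    ∑ k ∈ Finset.range (d + 1), P.coeff k * hComplZ N S (m - k) =
      if 0 ≤ m then PowerSeries.coeff m.toNat ((P : PowerSeries _) * complGen N S) else 0 := by
  split_ifs with hm
  · lift m to ℕ using hm
    rw [Int.toNat_natCast, PowerSeries.coeff_mul,
      Finset.Nat.sum_antidiagonal_eq_sum_range_succ_mk]
    have hterm : ∀ k, k ≤ m → PowerSeries.coeff k (P : PowerSeries _) *
        PowerSeries.coeff (m - k) (complGen N S) =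
          P.coeff k * hComplZ N S ((m : ℤ) - k) := by
      intro k hk
      rw [hComplZ, if_pos (by omega), hCompl_eq_coeff_complGen, Polynomial.coeff_coe]
      congr 3
      omega
    rw [Finset.sum_congr rfl fun k hk => hterm k (by simpa [Nat.lt_succ_iff] using hk)]
    have hleft : ∀ k, m < k → P.coeff k * hComplZ N S ((m : ℤ) - k) = 0 := fun k hk => by
      rw [hComplZ, if_neg (by omega), mul_zero]
    have hright : ∀ k, d < k → P.coeff k * hComplZ N S ((m : ℤ) - k) = 0 := fun k hk => by
      rw [Polynomial.coeff_eq_zero_of_natDegree_lt (by omega), zero_mul]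
    rcases le_total m d with h | h
    · refine (Finset.sum_subset (Finset.range_mono (by omega)) fun k _ hk => hleft k ?_).symm
      simp at hk
      omega
    · refine Finset.sum_subset (Finset.range_mono (by omega)) fun k _ hk => hright k ?_
      simp at hk
      omega
  · refine Finset.sum_eq_zero fun k _ => ?_
    rw [hComplZ, if_neg (by omega), mul_zero]

lemma hComplZ_sub_mul (N : ℕ) (S : Finset (Fin N)) (a : Fin N) (ha : a ∈ S) (m : ℤ) :
    hComplZ N S m - X a * hComplZ N S (m - 1) = hComplZ N (S.erase a) m := by
  have hdeg : (1 - Polynomial.C (X a : MvPolynomial (Fin N) ℚ) * Polynomial.X).natDegree ≤ 1 := by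
    compute_degree
  have h := sum_coeff_mul_hComplZ N S _ 1 hdeg m
  have hgen : ((1 - Polynomial.C (X a : MvPolynomial (Fin N) ℚ) * Polynomial.X :
      Polynomial _) : PowerSeries _) * complGen N S = complGen N (S.erase a) := by
    rw [complGen, complGen, ← Finset.mul_prod_erase S _ ha, ← mul_assoc]
    push_cast
    rw [mk_pow_mul_one_sub, one_mul]
  rw [hgen] at h
  rw [hComplZ.eq_1 N (S.erase a), hCompl_eq_coeff_complGen, ← h]
  simp [Finset.sum_range_succ, Polynomial.coeff_one, sub_eq_add_neg]

/-- Telescoping form of `hComplZ_sub_mul`. -/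
lemma sum_pow_mul_hComplZ_erase (N : ℕ) (S : Finset (Fin N)) (a : Fin N) (ha : a ∈ S)
    {p q : ℕ} (hpq : p ≤ q) (z : ℤ) :
    ∑ m ∈ Finset.Icc p q, X a ^ (q - m) * hComplZ N (S.erase a) (m + z) =
      hComplZ N S (q + z) - X a ^ (q - p + 1) * hComplZ N S (p + z - 1) := by
  induction q, hpq using Nat.le_induction with
  | base => simp [hComplZ_sub_mul N S a ha]
  | succ q hpq ih =>
    have hstep : ∑ m ∈ Finset.Icc p q, X a ^ (q + 1 - m) * hComplZ N (S.erase a) (m + z) =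
        X a * ∑ m ∈ Finset.Icc p q, X a ^ (q - m) * hComplZ N (S.erase a) (m + z) := by
      rw [Finset.mul_sum]
      refine Finset.sum_congr rfl fun m hm => ?_
      rw [Nat.succ_sub (Finset.mem_Icc.1 hm).2, pow_succ']
      ring
    rw [Finset.sum_Icc_succ_top (by omega), hstep, ih, ← hComplZ_sub_mul N S a ha,
      Nat.succ_sub hpq]
    have hcast : ((q + 1 : ℕ) : ℤ) + z - 1 = q + z := by push_cast; ring
    rw [hcast, Nat.sub_self, pow_succ (X a) (q - p + 1)]
    ring

/-- In `n + 1` variables, some combination of `n + 1` consecutive `h_m` with leading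
coefficient one is a power of the last variable. -/
lemma exists_sum_mul_hComplZ_eq_pow (n : ℕ) :
    ∃ c : Fin (n + 1) → MvPolynomial (Fin (n + 1)) ℚ, c (Fin.last n) = 1 ∧
      ∀ m : ℕ, ∑ j, c j * hComplZ (n + 1) Finset.univ ((m : ℤ) + j - n) =
        X (Fin.last n) ^ m := by
  set P : Polynomial (MvPolynomial (Fin (n + 1)) ℚ) :=
    ∏ i : Fin n, (1 - Polynomial.C (X i.castSucc) * Polynomial.X) with hPdef
  have hdeg : P.natDegree ≤ n := by
    refine (Polynomial.natDegree_prod_le _ _).trans ?_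
    refine (Finset.sum_le_card_nsmul _ _ 1 fun i _ => ?_).trans (by simp)
    compute_degree
  have hgen : (P : PowerSeries _) * complGen (n + 1) Finset.univ =
      PowerSeries.mk fun k => X (Fin.last n) ^ k := by
    have hcoe : (P : PowerSeries (MvPolynomial (Fin (n + 1)) ℚ)) =
        ∏ i : Fin n, (1 - PowerSeries.C (X i.castSucc) * PowerSeries.X) := by
      rw [hPdef, ← Polynomial.coeToPowerSeries.ringHom_apply, map_prod]
      simp
    rw [hcoe, complGen, Fin.prod_univ_castSucc, ← mul_assoc, ← Finset.prod_mul_distrib,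
      Finset.prod_eq_one fun i _ => mk_pow_mul_one_sub _, one_mul]
  refine ⟨fun j => P.coeff (n - j), ?_, fun m => ?_⟩
  · simp [hPdef, Polynomial.coeff_zero_eq_eval_zero, Polynomial.eval_prod]
  · have h := sum_coeff_mul_hComplZ (n + 1) Finset.univ P n hdeg m
    rw [if_pos (by omega), hgen, Int.toNat_natCast, PowerSeries.coeff_mk] at h
    rw [← h, ← Finset.sum_range_reflect, Finset.sum_range]
    refine Finset.sum_congr rfl fun j _ => ?_
    have hj : n + 1 - 1 - (j : ℕ) = n - j := by omega
    rw [hj]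
    congr 2
    push_cast [Nat.le_of_lt_succ j.2]
    ring

/-- Adding to each row a multiple of the next one does not change the determinant. -/
lemma det_eq_of_forall_row_eq_smul_add_succ {R : Type*} [CommRing R] {n : ℕ}
    {A B : Matrix (Fin (n + 1)) (Fin (n + 1)) R} (c : Fin n → R)
    (hlast : ∀ j, A (Fin.last n) j = B (Fin.last n) j)
    (hcast : ∀ i j, A i.castSucc j = B i.castSucc j + c i * A i.succ j) : A.det = B.det := by
  rw [← Matrix.det_submatrix_equiv_self Fin.revPerm A,
    ← Matrix.det_submatrix_equiv_self Fin.revPerm B]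
  refine Matrix.det_eq_of_forall_row_eq_smul_add_pred (fun i => c i.rev) (fun j => ?_)
    fun i j => ?_
  · simp [hlast]
  · simp [Fin.rev_succ, Fin.rev_castSucc, hcast]

/-- If a row reduction kills the last column except for its bottom entry, the determinant is
that entry times the determinant of the reduced upper left block. -/
lemma det_eq_mul_det_of_last_col {R : Type*} [CommRing R] {n : ℕ}
    (A : Matrix (Fin (n + 1)) (Fin (n + 1)) R) (c : Fin n → R)
    (hcol : ∀ i : Fin n, A i.castSucc (Fin.last n) = c i * A i.succ (Fin.last n)) :
    A.det = A (Fin.last n) (Fin.last n) *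
      (Matrix.of fun i j : Fin n =>
        A i.castSucc j.castSucc - c i * A i.succ j.castSucc).det := by
  set B : Matrix (Fin (n + 1)) (Fin (n + 1)) R :=
    Matrix.of fun i j => Fin.lastCases (motive := fun _ => R) (A (Fin.last n) j)
      (fun i => A i.castSucc j - c i * A i.succ j) i with hB
  rw [det_eq_of_forall_row_eq_smul_add_succ (B := B) c (by simp [hB]) (by simp [hB]),
    Matrix.det_succ_column B (Fin.last n), Fin.sum_univ_castSucc, Finset.sum_eq_zero, zero_add]
  · congr 1
    · simp [hB, ← two_mul]
    · congr 1
      ext i j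
      simp [hB]
  · intro i _
    simp [hB, hcol]

theorem stmt1 (n : ℕ) (Λ : Fin (n + 1) → ℕ) (hΛ : Antitone Λ) :
    schurJT (n + 1) Finset.univ Λ =
      ∑ M ∈ Finset.Icc (fun i : Fin n => Λ i.succ) (fun i : Fin n => Λ i.castSucc),
        X (Fin.last n) ^ ((∑ i, Λ i) - ∑ i, M i) *
          schurJT (n + 1) (Finset.univ.filter fun i : Fin (n + 1) => (i : ℕ) < n) M := by
  set y : MvPolynomial (Fin (n + 1)) ℚ := X (Fin.last n) with hy
  set A : Matrix (Fin (n + 1)) (Fin (n + 1)) (MvPolynomial (Fin (n + 1)) ℚ) :=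
    Matrix.of fun i j => hComplZ (n + 1) Finset.univ ((Λ i : ℤ) + (j : ℤ) - (i : ℤ)) with hA
  have hS : (Finset.univ.filter fun i : Fin (n + 1) => (i : ℕ) < n) =
      Finset.univ.erase (Fin.last n) := by
    ext i
    simp [Fin.ext_iff]
    omega
  have hle : ∀ i : Fin n, Λ i.succ ≤ Λ i.castSucc := fun i => hΛ (Fin.castSucc_le_succ i)
  obtain ⟨c, hc, hsum⟩ := exists_sum_mul_hComplZ_eq_pow n
  have hcol : ∀ i, ∑ j, c j • A i j = y ^ (Λ i + (n - i)) := fun i => by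
    rw [hy, ← hsum]
    refine Finset.sum_congr rfl fun j _ => ?_
    rw [smul_eq_mul, hA, Matrix.of_apply]
    congr 2
    push_cast [Nat.le_of_lt_succ i.2]
    ring
  have hdet : schurJT (n + 1) Finset.univ Λ =
      (A.updateCol (Fin.last n) fun i => y ^ (Λ i + (n - i))).det := by
    have h := Matrix.det_updateCol_sum A (Fin.last n) c
    simp only [hcol, hc, one_smul] at h
    exact h.symm
  have hrow : ∀ i j : Fin n, A i.castSucc j.castSucc -
      y ^ (Λ i.castSucc - Λ i.succ + 1) * A i.succ j.castSucc =
        ∑ m ∈ Finset.Icc (Λ i.succ) (Λ i.castSucc), y ^ (Λ i.castSucc - m) *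
          hComplZ (n + 1) (Finset.univ.erase (Fin.last n)) ((m : ℤ) + j - i) := fun i j => by
    simp only [add_sub_assoc]
    rw [sum_pow_mul_hComplZ_erase _ _ _ (Finset.mem_univ _) (hle i)]
    simp only [hA, Matrix.of_apply, Fin.val_castSucc, Fin.val_succ]
    have hshift : (Λ i.succ : ℤ) + j - (i + 1 : ℕ) = Λ i.succ + (j - i) - 1 := by
      push_cast
      ring
    rw [hshift, add_sub_assoc]
  rw [hdet, det_eq_mul_det_of_last_col _ fun i => y ^ (Λ i.castSucc - Λ i.succ + 1)]
  · have hne : ∀ j : Fin n, j.castSucc ≠ Fin.last n := fun j => (Fin.castSucc_lt_last j).ne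
    simp only [Matrix.updateCol_self, Matrix.updateCol_ne (hne _), hrow, hS]
    have hmulti := (Matrix.detRowAlternating (n := Fin n)
      (R := MvPolynomial (Fin (n + 1)) ℚ)).toMultilinearMap.map_sum_finset
      (fun (i : Fin n) (m : ℕ) (j : Fin n) => y ^ (Λ i.castSucc - m) *
          hComplZ (n + 1) (Finset.univ.erase (Fin.last n)) ((m : ℤ) + j - i))
      (fun i => Finset.Icc (Λ i.succ) (Λ i.castSucc))
    have hexpand : (Matrix.of fun i j : Fin n =>
        ∑ m ∈ Finset.Icc (Λ i.succ) (Λ i.castSucc), y ^ (Λ i.castSucc - m) *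
          hComplZ (n + 1) (Finset.univ.erase (Fin.last n)) ((m : ℤ) + j - i)).det =
        ∑ M ∈ Finset.Icc (fun i : Fin n => Λ i.succ) (fun i : Fin n => Λ i.castSucc),
          (Matrix.of fun i j : Fin n => y ^ (Λ i.castSucc - M i) *
            hComplZ (n + 1) (Finset.univ.erase (Fin.last n)) ((M i : ℤ) + j - i)).det := by
      refine Eq.trans ?_ hmulti
      refine congrArg Matrix.det ?_
      ext1 i j
      simp [Finset.sum_apply]
    rw [hexpand, Finset.mul_sum]
    refine Finset.sum_congr rfl fun M hM => ?_
    have hMle : ∀ i, M i ≤ Λ i.castSucc := (Finset.mem_Icc.1 hM).2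
    have hfactor := Matrix.det_mul_column (fun i : Fin n => y ^ (Λ i.castSucc - M i))
      (Matrix.of fun i j : Fin n =>
        hComplZ (n + 1) (Finset.univ.erase (Fin.last n)) ((M i : ℤ) + j - i))
    simp only [Matrix.of_apply] at hfactor
    rw [hfactor, ← mul_assoc, Finset.prod_pow_eq_pow_sum, ← pow_add, schurJT]
    congr 2
    rw [Finset.sum_tsub_distrib _ fun i _ => hMle i, Fin.sum_univ_castSucc, Fin.val_last]
    have := Finset.sum_le_sum fun i (_ : i ∈ Finset.univ) => hMle i
    omega
  · intro i
    simp only [Matrix.updateCol_self, ← pow_add, Fin.val_castSucc, Fin.val_succ]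
    congr 1
    have := hle i
    omega
end
end

section
/- For two disjoint sets of variables $(x_1,\ldots,x_k)$ and $(y_1,\ldots,y_l)$ and a partition $\Lambda$ with at most $k+l$ parts, we have $s_\Lambda(x_1,\ldots,x_k,y_1,\ldots,y_l) = \sum_{M, N} c^\Lambda_{M,N}\, s_M(x_1,\ldots,x_k)\, s_N(y_1,\ldots,y_l)$, where $M$ ranges over partitions with at most $k$ parts and $N$ over partitions with at most $l$ parts. -/
/- STATEMENT 3: Splitting the variables: for disjoint sets of variables (x₁,…,x_k) and
   (y₁,…,y_l) and a partition Λ with at most k+l parts,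
   s_Λ(x,y) = ∑_{M,N} c^Λ_{M,N} s_M(x) s_N(y),
   where M ranges over partitions with at most k parts and N over partitions with at
   most l parts, and c^Λ_{M,N} are the Littlewood–Richardson coefficients (characterized
   as the structure constants of Schur function multiplication, hypotheses `hfin`, `hc`).
   We realize the k+l variables as Fin (k+l), the x's being the first k and the y's the
   last l. -/

noncomputable section
open MvPolynomial

def IsPar (Λ : ℕ → ℕ) : Prop := Antitone Λ ∧ ∃ N, ∀ i, N ≤ i → Λ i = 0

def parLen (Λ : ℕ → ℕ) : ℕ := sInf {N | ∀ i, N ≤ i → Λ i = 0}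

/-- The Schur polynomial `s_Λ` of a partition `Λ : ℕ → ℕ` in the variables `Xᵢ, i ∈ S`. -/
def schurPS (n : ℕ) (S : Finset (Fin n)) (Λ : ℕ → ℕ) : MvPolynomial (Fin n) ℚ :=
  schurJT n S (fun i : Fin (parLen Λ) => Λ (i : ℕ))

/-! ### Complete homogeneous polynomials as coefficients of a power series -/

/-- The coefficient of a power series at an integer exponent, zero at negative exponents. -/
def coeffZ {R : Type*} [CommRing R] (G : PowerSeries R) (m : ℤ) : R :=
  if 0 ≤ m then PowerSeries.coeff m.toNat G else 0

/-- The generating series `∏_{i ∈ S} 1 / (1 - Xᵢ t)`. -/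
def complSeries (n : ℕ) (S : Finset (Fin n)) : PowerSeries (MvPolynomial (Fin n) ℚ) :=
  ∏ i ∈ S, PowerSeries.mk fun k => (X i : MvPolynomial (Fin n) ℚ) ^ k

/-- The polynomial `∏_{i ∈ S} (1 - Xᵢ t)`. -/
def elemPoly (n : ℕ) (S : Finset (Fin n)) : Polynomial (MvPolynomial (Fin n) ℚ) :=
  ∏ i ∈ S, (1 - Polynomial.C (X i : MvPolynomial (Fin n) ℚ) * Polynomial.X)

lemma hCompl_eq_coeff_complSeries (n : ℕ) (S : Finset (Fin n)) (k : ℕ) :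
    hCompl n S k = PowerSeries.coeff k (complSeries n S) := by
  rw [complSeries, PowerSeries.coeff_prod, hCompl]
  refine Finset.sum_nbij' (fun d => Finsupp.equivFunOnFinite.symm d) (fun d => ⇑d) ?_ ?_ ?_ ?_ ?_
  · intro d hd
    simp only [Finset.mem_filter, Finset.mem_Icc, Pi.le_def] at hd
    obtain ⟨⟨-, hd⟩, hs⟩ := hd
    have h0 : ∀ i, i ∉ S → d i = 0 := fun i hi => by simpa [hi] using hd i
    rw [Finset.mem_finsuppAntidiag]
    refine ⟨?_, ?_⟩
    · rw [← hs]
      exact Finset.sum_subset (Finset.subset_univ _) (fun i _ hi => h0 i hi)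
    · intro i hi
      by_contra h
      simp [h0 i h] at hi
  · intro d hd
    rw [Finset.mem_finsuppAntidiag] at hd
    obtain ⟨hs, hd⟩ := hd
    have h0 : ∀ i, i ∉ S → d i = 0 := fun i hi => by
      by_contra h
      exact hi (hd (by simpa using h))
    have hsum : ∑ i, d i = k := by
      rw [← hs]
      exact (Finset.sum_subset (Finset.subset_univ _) (fun i _ hi => h0 i hi)).symm
    simp only [Finset.mem_filter, Finset.mem_Icc, Pi.le_def]
    refine ⟨⟨fun _ => Nat.zero_le _, fun i => ?_⟩, hsum⟩
    split_ifs with hi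
    · rw [← hsum]
      exact Finset.single_le_sum (fun _ _ => Nat.zero_le _) (Finset.mem_univ i)
    · exact (h0 i hi).le
  · intro d _
    rfl
  · intro d _
    ext i
    rfl
  · intro d hd
    simp only [Finset.mem_filter, Finset.mem_Icc, Pi.le_def] at hd
    obtain ⟨⟨-, hd⟩, hs⟩ := hd
    have h0 : ∀ i, i ∉ S → d i = 0 := fun i hi => by simpa [hi] using hd i
    simp only [PowerSeries.coeff_mk, Finsupp.equivFunOnFinite_symm_apply_apply]
    exact (Finset.prod_subset (Finset.subset_univ _) (fun i _ hi => by simp [h0 i hi])).symm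

lemma hComplZ_eq_coeffZ (n : ℕ) (S : Finset (Fin n)) (m : ℤ) :
    hComplZ n S m = coeffZ (complSeries n S) m := by
  simp only [hComplZ, coeffZ, hCompl_eq_coeff_complSeries]

lemma geom_series_mul {R : Type*} [CommRing R] (a : R) :
    (PowerSeries.mk fun k => a ^ k) * (1 - PowerSeries.C a * PowerSeries.X) = 1 := by
  ext m
  rw [mul_sub, mul_one, ← mul_assoc, mul_comm _ (PowerSeries.C a), mul_assoc]
  cases m with
  | zero => simp
  | succ m => simp [PowerSeries.coeff_succ_mul_X, pow_succ', PowerSeries.coeff_one]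

lemma complSeries_mul_elemPoly (n : ℕ) (S : Finset (Fin n)) :
    complSeries n S * (elemPoly n S : PowerSeries (MvPolynomial (Fin n) ℚ)) = 1 := by
  have : (elemPoly n S : PowerSeries (MvPolynomial (Fin n) ℚ)) =
      ∏ i ∈ S, (1 - PowerSeries.C (X i : MvPolynomial (Fin n) ℚ) * PowerSeries.X) := by
    rw [elemPoly, ← Polynomial.coeToPowerSeries.ringHom_apply, map_prod]
    simp
  rw [this, complSeries, ← Finset.prod_mul_distrib]
  exact Finset.prod_eq_one fun i _ => geom_series_mul _

lemma complSeries_mul_elemPoly_erase (n : ℕ) (k : Fin n) :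
    complSeries n Finset.univ *
      (elemPoly n (Finset.univ.erase k) : PowerSeries (MvPolynomial (Fin n) ℚ)) =
      PowerSeries.mk fun m => (X k : MvPolynomial (Fin n) ℚ) ^ m := by
  have h := complSeries_mul_elemPoly n (Finset.univ.erase k)
  rw [complSeries, ← Finset.mul_prod_erase _ _ (Finset.mem_univ k), mul_assoc]
  rw [complSeries] at h
  rw [h, mul_one]

lemma natDegree_elemPoly_le (n : ℕ) (S : Finset (Fin n)) :
    (elemPoly n S).natDegree ≤ S.card := by
  rw [elemPoly]
  refine (Polynomial.natDegree_prod_le _ _).trans ?_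
  refine (Finset.sum_le_card_nsmul _ _ 1 fun i _ => ?_).trans (by simp)
  compute_degree

lemma coeff_zero_elemPoly (n : ℕ) (S : Finset (Fin n)) : (elemPoly n S).coeff 0 = 1 := by
  simp [elemPoly, Polynomial.coeff_zero_prod]

/-- Multiplication by a polynomial of degree less than `r` as a finite convolution. -/
lemma sum_coeffZ_mul_coeff {R : Type*} [CommRing R] (G : PowerSeries R) (p : Polynomial R)
    {r : ℕ} (hp : p.natDegree < r) (m : ℕ) :
    ∑ j : Fin r, coeffZ G ((m : ℤ) - ((r : ℤ) - 1) + (j : ℤ)) * p.coeff (r - 1 - j) =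
      PowerSeries.coeff m (G * (p : PowerSeries R)) := by
  set F : ℕ → R := fun t => coeffZ G ((m : ℤ) - t) * p.coeff t with hF
  have hL : ∑ j : Fin r, coeffZ G ((m : ℤ) - ((r : ℤ) - 1) + (j : ℤ)) * p.coeff (r - 1 - j) =
      ∑ t ∈ Finset.range r, F t := by
    rw [← Fin.sum_univ_eq_sum_range, ← Equiv.sum_comp Fin.revPerm]
    refine Finset.sum_congr rfl fun j _ => ?_
    have h : ((Fin.revPerm j : Fin r) : ℕ) = r - 1 - j := by
      rw [Fin.revPerm_apply, Fin.val_rev]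
      omega
    simp only [hF, h]
    congr 2
    · omega
    · omega
  have hR : PowerSeries.coeff m (G * (p : PowerSeries R)) = ∑ t ∈ Finset.range (m + 1), F t := by
    rw [mul_comm, PowerSeries.coeff_mul, Finset.Nat.sum_antidiagonal_eq_sum_range_succ
      (fun a b => PowerSeries.coeff a (p : PowerSeries R) * PowerSeries.coeff b G)]
    refine Finset.sum_congr rfl fun t ht => ?_
    have ht' : t ≤ m := Nat.lt_succ_iff.mp (Finset.mem_range.mp ht)
    have h : ((m : ℤ) - t).toNat = m - t := by omega
    simp only [hF, coeffZ, h, Polynomial.coeff_coe]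
    rw [if_pos (by omega), mul_comm]
  rw [hL, hR]
  rcases le_total r (m + 1) with h | h
  · refine Finset.sum_subset (Finset.range_subset_range.mpr h) fun t _ ht => ?_
    have : p.coeff t = 0 :=
      Polynomial.coeff_eq_zero_of_natDegree_lt (hp.trans_le (by simpa using ht))
    simp [hF, this]
  · refine (Finset.sum_subset (Finset.range_subset_range.mpr h) fun t _ ht => ?_).symm
    have : ¬ (0 : ℤ) ≤ (m : ℤ) - t := by
      have := Finset.mem_range.not.mp ht
      omega
    simp only [hF, coeffZ, if_neg this, zero_mul]

/-! ### Jacobi–Trudi determinants -/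

/-- The Jacobi–Trudi determinant with `r` rows attached to a power series. -/
def jacobiTrudi {R : Type*} [CommRing R] (G : PowerSeries R) (r : ℕ) (Λ : ℕ → ℕ) : R :=
  Matrix.det (Matrix.of fun i j : Fin r => coeffZ G ((Λ i : ℤ) + (j : ℤ) - (i : ℤ)))

lemma coeffZ_of_neg {R : Type*} [CommRing R] (G : PowerSeries R) {m : ℤ} (hm : m < 0) :
    coeffZ G m = 0 :=
  if_neg (not_le.mpr hm)

lemma coeffZ_of_nonneg {R : Type*} [CommRing R] (G : PowerSeries R) {m : ℤ} {k : ℕ}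
    (hm : m = k) : coeffZ G m = PowerSeries.coeff k G := by
  subst hm
  simp [coeffZ]

lemma coeff_zero_complSeries (n : ℕ) (S : Finset (Fin n)) :
    PowerSeries.coeff 0 (complSeries n S) = 1 := by
  simp [complSeries, map_prod]

lemma schurPS_eq_jacobiTrudi_parLen (n : ℕ) (S : Finset (Fin n)) (Λ : ℕ → ℕ) :
    schurPS n S Λ = jacobiTrudi (complSeries n S) (parLen Λ) Λ := by
  simp only [schurPS, schurJT, jacobiTrudi, hComplZ_eq_coeffZ]

lemma jacobiTrudi_succ {R : Type*} [CommRing R] {G : PowerSeries R}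
    (hG : PowerSeries.coeff 0 G = 1) {r : ℕ} {Λ : ℕ → ℕ} (hr : Λ r = 0) :
    jacobiTrudi G (r + 1) Λ = jacobiTrudi G r Λ := by
  rw [jacobiTrudi, Matrix.det_succ_row _ (Fin.last r), Finset.sum_eq_single (Fin.last r)]
  · simp only [Matrix.of_apply, Fin.val_last, hr, Fin.succAbove_last]
    rw [coeffZ_of_nonneg G (k := 0) (by simp), hG, ← two_mul, pow_mul]
    simp only [even_two, Even.neg_pow, one_pow, mul_one, one_mul]
    rfl
  · intro j _ hj
    have : (j : ℕ) < r := by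
      have := Fin.lt_last_iff_ne_last.mpr hj
      simpa [Fin.lt_def] using this
    rw [Matrix.of_apply, coeffZ_of_neg]
    · simp
    · simp only [Fin.val_last, hr]
      omega
  · simp

lemma jacobiTrudi_eq_of_le {R : Type*} [CommRing R] {G : PowerSeries R}
    (hG : PowerSeries.coeff 0 G = 1) {r s : ℕ} (hrs : r ≤ s) {Λ : ℕ → ℕ}
    (hr : ∀ i, r ≤ i → Λ i = 0) : jacobiTrudi G s Λ = jacobiTrudi G r Λ := by
  induction s, hrs using Nat.le_induction with
  | base => rfl
  | succ s hs ih => rw [jacobiTrudi_succ hG (hr s hs), ih]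

lemma IsPar.eq_zero_of_parLen_le {Λ : ℕ → ℕ} (hΛ : IsPar Λ) {i : ℕ} (hi : parLen Λ ≤ i) :
    Λ i = 0 :=
  (Nat.sInf_mem (s := {N | ∀ i, N ≤ i → Λ i = 0}) hΛ.2) i hi

lemma parLen_le {Λ : ℕ → ℕ} {r : ℕ} (hr : ∀ i, r ≤ i → Λ i = 0) : parLen Λ ≤ r :=
  Nat.sInf_le hr

lemma IsPar.pos_of_lt_parLen {Λ : ℕ → ℕ} (hΛ : IsPar Λ) {i : ℕ} (hi : i < parLen Λ) :
    0 < Λ i := by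
  by_contra h
  have h0 : Λ i = 0 := by omega
  have : parLen Λ ≤ i := parLen_le fun j hj => Nat.le_zero.mp (h0 ▸ hΛ.1 hj)
  omega

lemma schurPS_eq_jacobiTrudi {n : ℕ} (S : Finset (Fin n)) {Λ : ℕ → ℕ} (hΛ : IsPar Λ) {r : ℕ}
    (hr : parLen Λ ≤ r) : schurPS n S Λ = jacobiTrudi (complSeries n S) r Λ := by
  rw [schurPS_eq_jacobiTrudi_parLen,
    jacobiTrudi_eq_of_le (coeff_zero_complSeries n S) hr fun i hi => hΛ.eq_zero_of_parLen_le hi]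

/-- A Schur polynomial vanishes when the partition has more parts than there are variables. -/
lemma schurPS_eq_zero {n : ℕ} {S : Finset (Fin n)} {Λ : ℕ → ℕ} (hΛ : IsPar Λ)
    (h : S.card < parLen Λ) : schurPS n S Λ = 0 := by
  rw [schurPS_eq_jacobiTrudi_parLen, jacobiTrudi, ← Matrix.exists_mulVec_eq_zero_iff]
  refine ⟨fun j => (elemPoly n S).coeff (parLen Λ - 1 - j), fun h0 => ?_, ?_⟩
  · have := congrFun h0 ⟨parLen Λ - 1, by omega⟩
    simp [coeff_zero_elemPoly] at this
  · ext1 i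
    have hi := hΛ.pos_of_lt_parLen i.2
    have key := sum_coeffZ_mul_coeff (complSeries n S) (elemPoly n S)
      ((natDegree_elemPoly_le n S).trans_lt h) (Λ i + (parLen Λ - 1 - i))
    rw [complSeries_mul_elemPoly, PowerSeries.coeff_one, if_neg (by omega)] at key
    rw [Pi.zero_apply, ← key, Matrix.mulVec, dotProduct]
    refine Finset.sum_congr rfl fun j _ => ?_
    rw [Matrix.of_apply]
    congr 2
    omega

/-! ### Alternants -/

/-- The exponents `Λᵢ + (n - 1 - i)`. -/
def shiftedParts (n : ℕ) (Λ : ℕ → ℕ) : Fin n → ℕ := fun i => Λ i + (n - 1 - i)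

/-- The alternant `det (Xⱼ ^ αᵢ)`. -/
def alternant (R : Type*) [CommRing R] {n : ℕ} (α : Fin n → ℕ) : MvPolynomial (Fin n) R :=
  Matrix.det (Matrix.of fun i j : Fin n => (X j : MvPolynomial (Fin n) R) ^ α i)

lemma jacobiTrudi_zero {R : Type*} [CommRing R] {G : PowerSeries R}
    (hG : PowerSeries.coeff 0 G = 1) (r : ℕ) : jacobiTrudi G r (fun _ => 0) = 1 := by
  rw [jacobiTrudi_eq_of_le hG (Nat.zero_le r) fun _ _ => rfl, jacobiTrudi, Matrix.det_fin_zero]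

/-- The bialternant formula. -/
lemma jacobiTrudi_mul_alternant (n : ℕ) (Λ : ℕ → ℕ) :
    jacobiTrudi (complSeries n Finset.univ) n Λ * alternant ℚ (shiftedParts n fun _ => 0) =
      alternant ℚ (shiftedParts n Λ) := by
  set E : Matrix (Fin n) (Fin n) (MvPolynomial (Fin n) ℚ) :=
    Matrix.of fun j k => (elemPoly n (Finset.univ.erase k)).coeff (n - 1 - j)
  have key : ∀ M : ℕ → ℕ, alternant ℚ (shiftedParts n M) =
      jacobiTrudi (complSeries n Finset.univ) n M * E.det := by
    intro M
    rw [alternant, jacobiTrudi, ← Matrix.det_mul]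
    congr 1
    ext1 i k
    have hdeg : (elemPoly n (Finset.univ.erase k)).natDegree < n := by
      refine (natDegree_elemPoly_le n _).trans_lt ?_
      rw [Finset.card_erase_of_mem (Finset.mem_univ k), Finset.card_univ, Fintype.card_fin]
      have := k.2
      omega
    have h := sum_coeffZ_mul_coeff (complSeries n Finset.univ) _ hdeg (shiftedParts n M i)
    rw [complSeries_mul_elemPoly_erase, PowerSeries.coeff_mk] at h
    rw [Matrix.of_apply, ← h, Matrix.mul_apply]
    refine Finset.sum_congr rfl fun j _ => ?_
    simp only [E, Matrix.of_apply]
    congr 2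
    have := i.2
    simp only [shiftedParts]
    omega
  rw [key Λ, key fun _ => 0, jacobiTrudi_zero (coeff_zero_complSeries n _), one_mul]

lemma schurPS_mul_alternant {n : ℕ} {Λ : ℕ → ℕ} (hΛ : IsPar Λ) (hn : parLen Λ ≤ n) :
    schurPS n Finset.univ Λ * alternant ℚ (shiftedParts n fun _ => 0) =
      alternant ℚ (shiftedParts n Λ) := by
  rw [schurPS_eq_jacobiTrudi _ hΛ hn, jacobiTrudi_mul_alternant]

lemma coeff_prod_aeval_X {R : Type*} [CommRing R] {n : ℕ} (p : Fin n → Polynomial R)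
    (β : Fin n →₀ ℕ) :
    coeff β (∏ j, Polynomial.aeval (X j : MvPolynomial (Fin n) R) (p j)) =
      ∏ j, (p j).coeff (β j) := by
  obtain ⟨K, hK⟩ : ∃ K, ∀ j, (p j).natDegree < K ∧ β j < K :=
    ⟨(∑ j, ((p j).natDegree + β j)) + 1, fun j => by
      have := Finset.single_le_sum (f := fun j => (p j).natDegree + β j)
        (fun _ _ => Nat.zero_le _) (Finset.mem_univ j)
      constructor <;> omega⟩
  have hexp : ∏ j, Polynomial.aeval (X j : MvPolynomial (Fin n) R) (p j) =
      ∑ d ∈ Fintype.piFinset fun _ : Fin n => Finset.range K,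
        monomial (Finsupp.equivFunOnFinite.symm d) (∏ j, (p j).coeff (d j)) := by
    simp_rw [Polynomial.aeval_eq_sum_range' (hK _).1]
    rw [Finset.prod_univ_sum]
    refine Finset.sum_congr rfl fun d _ => ?_
    rw [monomial_eq, Finsupp.prod_fintype _ _ (by simp), map_prod, ← Finset.prod_mul_distrib]
    simp [smul_eq_C_mul]
  rw [hexp, coeff_sum, Finset.sum_eq_single (β : Fin n → ℕ)]
  · rw [coeff_monomial, if_pos (by ext; rfl)]
  · intro d _ hd
    rw [coeff_monomial, if_neg]
    rintro rfl
    exact hd rfl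
  · intro h
    exact absurd (by simpa using fun j => (hK j).2) h

lemma coeff_det_aeval_X {R : Type*} [CommRing R] {n : ℕ} (p : Fin n → Polynomial R)
    (β : Fin n →₀ ℕ) :
    coeff β (Matrix.det (Matrix.of fun i j : Fin n =>
        Polynomial.aeval (X j : MvPolynomial (Fin n) R) (p i))) =
      Matrix.det (Matrix.of fun i j : Fin n => (p i).coeff (β j)) := by
  rw [Matrix.det_apply, Matrix.det_apply, coeff_sum]
  refine Finset.sum_congr rfl fun w _ => ?_
  simp only [Units.smul_def, Matrix.of_apply]
  rw [← coeff_prod_aeval_X fun j => p (w j)]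
  exact map_zsmul (coeffAddMonoidHom β) _ _

lemma coeff_alternant {R : Type*} [CommRing R] {n : ℕ} (α : Fin n → ℕ) (β : Fin n →₀ ℕ) :
    coeff β (alternant R α) =
      Matrix.det (Matrix.of fun i j : Fin n => if β j = α i then (1 : R) else 0) := by
  have h := coeff_det_aeval_X (fun i => (Polynomial.X : Polynomial R) ^ α i) β
  simp only [map_pow, Polynomial.aeval_X, Polynomial.coeff_X_pow] at h
  exact h

lemma strictAnti_shiftedParts {n : ℕ} {Λ : ℕ → ℕ} (hΛ : Antitone Λ) :
    StrictAnti (shiftedParts n Λ) := by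
  intro i j hij
  have h := hΛ (show (i : ℕ) ≤ j from hij.le)
  have hij' : (i : ℕ) < j := hij
  have := j.2
  simp only [shiftedParts]
  omega

lemma coeff_alternant_of_strictAnti {R : Type*} [CommRing R] {n : ℕ} {α : Fin n → ℕ}
    {β : Fin n →₀ ℕ} (hα : StrictAnti α) (hβ : StrictAnti β) :
    coeff β (alternant R α) = if α = β then 1 else 0 := by
  rw [coeff_alternant]
  split_ifs with h
  · have : (Matrix.of fun i j : Fin n => if β j = α i then (1 : R) else 0) = 1 := by
      ext i j
      rw [Matrix.of_apply, Matrix.one_apply, h]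
      simp only [hβ.injective.eq_iff, eq_comm]
    rw [this, Matrix.det_one]
  · rw [Matrix.det_apply]
    refine Finset.sum_eq_zero fun w _ => ?_
    obtain ⟨j, hj⟩ : ∃ j, β j ≠ α (w j) := by
      by_contra! hall
      refine h ?_
      have hr : Set.range (OrderDual.toDual ∘ α) = Set.range (OrderDual.toDual ∘ β) := by
        have : (β : Fin n → ℕ) = α ∘ w := funext hall
        rw [this, ← Function.comp_assoc, w.surjective.range_comp]
      exact (StrictMono.range_inj hα.dual_right hβ.dual_right).mp hr
    rw [Finset.prod_eq_zero (Finset.mem_univ j), smul_zero]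
    rw [Matrix.of_apply, if_neg hj]

lemma shiftedParts_injOn {n : ℕ} {Λ M : ℕ → ℕ} (hΛ : IsPar Λ) (hΛn : parLen Λ ≤ n) (hM : IsPar M)
    (hMn : parLen M ≤ n) (h : shiftedParts n Λ = shiftedParts n M) : Λ = M := by
  funext i
  by_cases hi : i < n
  · have := congrFun h ⟨i, hi⟩
    simpa [shiftedParts] using this
  · rw [hΛ.eq_zero_of_parLen_le (by omega), hM.eq_zero_of_parLen_le (by omega)]

/-! ### Partitions in a box and truncation of exponents -/

lemma finite_partitions_in_box (n D : ℕ) :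
    {M : ℕ → ℕ | (IsPar M ∧ parLen M ≤ n) ∧ M 0 ≤ D}.Finite := by
  refine Set.Finite.of_finite_image (f := shiftedParts n)
    ((Set.finite_Iic fun _ : Fin n => D + n).subset ?_) ?_
  · rintro _ ⟨M, ⟨⟨hM, -⟩, hD⟩, rfl⟩ i
    have := hM.1 (Nat.zero_le i)
    simp only [shiftedParts]
    omega
  · intro M hM M' hM' h
    exact shiftedParts_injOn hM.1.1 hM.1.2 hM'.1.1 hM'.1.2 h

/-- The partitions with at most `n` parts, all of which are at most `D`. -/
def boxPartitions (n D : ℕ) : Finset (ℕ → ℕ) := (finite_partitions_in_box n D).toFinset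

lemma mem_boxPartitions {n D : ℕ} {M : ℕ → ℕ} :
    M ∈ boxPartitions n D ↔ (IsPar M ∧ parLen M ≤ n) ∧ M 0 ≤ D := by
  simp [boxPartitions]

lemma StrictAnti.add_le_of_le {n : ℕ} {β : Fin n → ℕ} (hβ : StrictAnti β) {i j : Fin n}
    (hij : i ≤ j) : β j + (j - i : ℕ) ≤ β i := by
  obtain ⟨j, hj⟩ := j
  obtain ⟨i, hi⟩ := i
  simp only [Fin.mk_le_mk] at hij ⊢
  induction j, hij using Nat.le_induction with
  | base => simp
  | succ j hij ih =>
    have h1 := ih (by omega)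
    have h2 : β ⟨j + 1, hj⟩ < β ⟨j, by omega⟩ := hβ (by simp [Fin.lt_def])
    omega

lemma exists_shiftedParts_eq {n D : ℕ} {β : Fin n → ℕ} (hβ : StrictAnti β)
    (hD : ∀ j, β j ≤ D) : ∃ M ∈ boxPartitions n D, shiftedParts n M = β := by
  have hlow : ∀ i : Fin n, n - 1 - i ≤ β i := fun i => by
    have := hβ.add_le_of_le (show i ≤ ⟨n - 1, by have := i.2; omega⟩ by
      have := i.2
      rw [Fin.le_def]
      simp only
      omega)
    simp only at this
    omega
  let M : ℕ → ℕ := fun i => if h : i < n then β ⟨i, h⟩ - (n - 1 - i) else 0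
  have hzero : ∀ i, n ≤ i → M i = 0 := fun i hi => dif_neg (by omega)
  have hanti : Antitone M := by
    intro i j hij
    by_cases hj : j < n
    · have hi : i < n := by omega
      have h1 := hβ.add_le_of_le (show (⟨i, hi⟩ : Fin n) ≤ ⟨j, hj⟩ from hij)
      have h2 := hlow ⟨i, hi⟩
      simp only [M, dif_pos hi, dif_pos hj]
      simp only at h1 h2
      omega
    · rw [hzero j (by omega)]
      exact Nat.zero_le _
  refine ⟨M, mem_boxPartitions.mpr ⟨⟨⟨hanti, n, hzero⟩, parLen_le hzero⟩, ?_⟩, ?_⟩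
  · by_cases h : 0 < n
    · have := hD ⟨0, h⟩
      simp only [M, dif_pos h]
      omega
    · rw [hzero 0 (by omega)]
      exact Nat.zero_le _
  · funext i
    have := hlow i
    simp only [shiftedParts, M, dif_pos i.2, Fin.eta]
    omega

/-- The ideal generated by the powers `Xⱼ ^ (D + 1)`. -/
def boxIdeal (R : Type*) [CommRing R] (n D : ℕ) : Ideal (MvPolynomial (Fin n) R) :=
  Ideal.span ((fun s => monomial s (1 : R)) '' Set.range fun j : Fin n => Finsupp.single j (D + 1))

lemma mem_boxIdeal {R : Type*} [CommRing R] {n D : ℕ} {f : MvPolynomial (Fin n) R} :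
    f ∈ boxIdeal R n D ↔ ∀ β : Fin n →₀ ℕ, (∀ j, β j ≤ D) → coeff β f = 0 := by
  rw [boxIdeal, mem_ideal_span_monomial_image]
  simp only [Set.exists_range_iff, Finsupp.single_le_iff, mem_support_iff]
  refine forall_congr' fun β => ?_
  rw [← not_imp_not]
  simp only [not_exists, not_le, Nat.lt_succ_iff, not_not]

lemma X_pow_mem_boxIdeal {R : Type*} [CommRing R] {n D : ℕ} (j : Fin n) {m : ℕ} (hm : D < m) :
    (X j : MvPolynomial (Fin n) R) ^ m ∈ boxIdeal R n D := by
  obtain ⟨c, rfl⟩ := Nat.exists_eq_add_of_lt hm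
  rw [show D + c + 1 = (D + 1) + c by ring, pow_add]
  refine Ideal.mul_mem_right _ _ (Ideal.subset_span ⟨_, ⟨j, rfl⟩, ?_⟩)
  simp [X_pow_eq_monomial]

/-- The truncated product `∏ⱼ G(Xⱼ)`. -/
def boxSeries {R : Type*} [CommRing R] (n D : ℕ) (G : PowerSeries R) : MvPolynomial (Fin n) R :=
  ∏ j, Polynomial.aeval (X j : MvPolynomial (Fin n) R) (PowerSeries.trunc (D + 1) G)

lemma mk_boxSeries_mul {R : Type*} [CommRing R] (n D : ℕ) (G H : PowerSeries R) :
    Ideal.Quotient.mk (boxIdeal R n D) (boxSeries n D (G * H)) =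
      Ideal.Quotient.mk (boxIdeal R n D) (boxSeries n D G * boxSeries n D H) := by
  simp only [boxSeries, ← Finset.prod_mul_distrib, map_prod]
  refine Finset.prod_congr rfl fun j _ => ?_
  rw [Ideal.Quotient.eq, ← map_mul, ← map_sub]
  obtain ⟨q, hq⟩ : (Polynomial.X : Polynomial R) ^ (D + 1) ∣ PowerSeries.trunc (D + 1) (G * H) -
      PowerSeries.trunc (D + 1) G * PowerSeries.trunc (D + 1) H := by
    rw [Polynomial.X_pow_dvd_iff]
    intro d hd
    rw [Polynomial.coeff_sub, ← PowerSeries.trunc_trunc_mul_trunc, PowerSeries.coeff_trunc,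
      if_pos hd, ← Polynomial.coe_mul, Polynomial.coeff_coe, sub_self]
  rw [hq, map_mul, map_pow, Polynomial.aeval_X]
  exact Ideal.mul_mem_right _ _ (X_pow_mem_boxIdeal j (Nat.lt_succ_self D))

lemma coeff_boxSeries_mul_alternant {R : Type*} [CommRing R] {n D : ℕ} (G : PowerSeries R)
    {β : Fin n →₀ ℕ} (hβ : ∀ j, β j ≤ D) (α : Fin n → ℕ) :
    coeff β (boxSeries n D G * alternant R α) =
      Matrix.det (Matrix.of fun i j : Fin n => coeffZ G ((β j : ℤ) - (α i : ℤ))) := by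
  have h := coeff_det_aeval_X
    (fun i => (Polynomial.X : Polynomial R) ^ α i * PowerSeries.trunc (D + 1) G) β
  rw [boxSeries, alternant, ← Matrix.det_mul_row]
  simp only [map_mul, map_pow, Polynomial.aeval_X] at h
  simp only [Matrix.of_apply, mul_comm (Polynomial.aeval _ _)]
  rw [h]
  congr 1
  ext i j
  rw [Matrix.of_apply, Matrix.of_apply, Polynomial.coeff_X_pow_mul', PowerSeries.coeff_trunc]
  have := hβ j
  split_ifs with h1 h2
  · exact (coeffZ_of_nonneg G (by omega)).symm
  · omega
  · exact (coeffZ_of_neg G (by omega)).symm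

/-- The coefficients of the truncated Cauchy product are Jacobi–Trudi determinants. -/
lemma coeff_boxSeries_mul_alternant_shiftedParts {R : Type*} [CommRing R] {n D : ℕ}
    (G : PowerSeries R) {Λ : ℕ → ℕ} {β : Fin n →₀ ℕ} (hβ : ∀ j, β j ≤ D)
    (hΛ : shiftedParts n Λ = β) :
    coeff β (boxSeries n D G * alternant R (shiftedParts n fun _ => 0)) = jacobiTrudi G n Λ := by
  rw [coeff_boxSeries_mul_alternant G hβ, jacobiTrudi, ← Matrix.det_transpose]
  congr 1
  ext i j
  rw [Matrix.transpose_apply, Matrix.of_apply, Matrix.of_apply, ← hΛ]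
  have := i.2
  have := j.2
  congr 1
  simp only [shiftedParts]
  omega

lemma eq_zero_of_alternating {R : Type*} [CommRing R] [IsDomain R] [CharZero R] {n D : ℕ}
    {f : (Fin n → ℕ) → R}
    (hf : ∀ (w : Equiv.Perm (Fin n)) (β : Fin n → ℕ), (∀ j, β j ≤ D) →
      f (β ∘ w) = ((Equiv.Perm.sign w : ℤ) : R) * f β)
    (h0 : ∀ β, StrictAnti β → (∀ j, β j ≤ D) → f β = 0) (β : Fin n → ℕ) (hβ : ∀ j, β j ≤ D) :
    f β = 0 := by
  by_cases hinj : Function.Injective β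
  · let w : Equiv.Perm (Fin n) := Fin.revPerm.trans (Tuple.sort β)
    have hanti : StrictAnti (β ∘ w) := by
      have h : StrictMono (β ∘ Tuple.sort β) :=
        (Tuple.monotone_sort β).strictMono_of_injective
          (hinj.comp (Tuple.sort β).injective)
      exact h.comp_strictAnti Fin.rev_strictAnti
    have h := hf w β hβ
    rw [h0 _ hanti fun j => hβ _] at h
    rcases Int.units_eq_one_or (Equiv.Perm.sign w) with hw | hw <;> simpa [hw] using h.symm
  · simp only [Function.Injective, not_forall] at hinj
    obtain ⟨a, b, hab, hne⟩ := hinj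
    have hcomp : β ∘ Equiv.swap a b = β := by
      funext i
      simp only [Function.comp_apply, Equiv.swap_apply_def]
      split_ifs with h1 h2
      · rw [h1, hab]
      · rw [h2, hab]
      · rfl
    have h := hf (Equiv.swap a b) β hβ
    rw [hcomp, Equiv.Perm.sign_swap hne] at h
    simp only [Units.val_neg, Units.val_one, Int.cast_neg, Int.cast_one, neg_one_mul] at h
    exact self_eq_neg.mp h

/-- The Cauchy expansion of `∏ⱼ G(Xⱼ)`, truncated. -/
lemma mk_boxSeries_mul_alternant {R : Type*} [CommRing R] [IsDomain R] [CharZero R] (n D : ℕ)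
    (G : PowerSeries R) :
    Ideal.Quotient.mk (boxIdeal R n D)
        (boxSeries n D G * alternant R (shiftedParts n fun _ => 0)) =
      Ideal.Quotient.mk (boxIdeal R n D)
        (∑ M ∈ boxPartitions n D, C (jacobiTrudi G n M) * alternant R (shiftedParts n M)) := by
  rw [Ideal.Quotient.eq, mem_boxIdeal]
  intro β hβ
  have key := eq_zero_of_alternating (D := D)
    (f := fun γ : Fin n → ℕ => coeff (Finsupp.equivFunOnFinite.symm γ)
      (boxSeries n D G * alternant R (shiftedParts n fun _ => 0) -
        ∑ M ∈ boxPartitions n D, C (jacobiTrudi G n M) * alternant R (shiftedParts n M)))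
    ?_ ?_ β hβ
  · rwa [Finsupp.equivFunOnFinite_symm_coe] at key
  · intro w γ hγ
    have hperm : ∀ A : Matrix (Fin n) (Fin n) R, Matrix.det (Matrix.of fun i j => A i (w j)) =
        ((Equiv.Perm.sign w : ℤ) : R) * A.det := fun A => Matrix.det_permute' w A
    simp only [coeff_sub, coeff_sum, coeff_C_mul]
    rw [coeff_boxSeries_mul_alternant (β := Finsupp.equivFunOnFinite.symm γ) G hγ,
      coeff_boxSeries_mul_alternant (β := Finsupp.equivFunOnFinite.symm (γ ∘ w)) G
        fun j => hγ (w j), mul_sub, Finset.mul_sum]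
    congr 1
    · exact hperm (Matrix.of fun i j => coeffZ G ((γ j : ℤ) - _))
    · refine Finset.sum_congr rfl fun M _ => ?_
      rw [mul_left_comm, coeff_alternant, coeff_alternant]
      congr 1
      exact hperm (Matrix.of fun i j => if γ j = shiftedParts n M i then 1 else 0)
  · intro γ hanti hγ
    obtain ⟨M, hM, rfl⟩ := exists_shiftedParts_eq hanti hγ
    have hM' := mem_boxPartitions.mp hM
    simp only [coeff_sub, coeff_sum, coeff_C_mul]
    rw [coeff_boxSeries_mul_alternant_shiftedParts G hγ (Λ := M) rfl, Finset.sum_eq_single M]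
    · rw [coeff_alternant_of_strictAnti hanti hanti]
      simp
    · intro M' hM'' hne
      have hM''' := mem_boxPartitions.mp hM''
      rw [coeff_alternant_of_strictAnti (strictAnti_shiftedParts hM'''.1.1.1) hanti, if_neg,
        mul_zero]
      intro h
      exact hne (shiftedParts_injOn hM'''.1.1 hM'''.1.2 hM'.1.1 hM'.1.2 h)
    · exact fun h => absurd hM h

/-! ### Splitting the variables -/

lemma alternant_mem_boxIdeal {R : Type*} [CommRing R] {n D : ℕ} {α : Fin n → ℕ} {i : Fin n}
    (hi : D < α i) : alternant R α ∈ boxIdeal R n D := by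
  rw [← Ideal.Quotient.eq_zero_iff_mem, alternant, RingHom.map_det]
  refine Matrix.det_eq_zero_of_row_eq_zero i fun j => ?_
  rw [RingHom.mapMatrix_apply, Matrix.map_apply, Matrix.of_apply, Ideal.Quotient.eq_zero_iff_mem]
  exact X_pow_mem_boxIdeal j hi

lemma shiftedParts_le {n : ℕ} {Λ : ℕ → ℕ} (hΛ : Antitone Λ) (j : Fin n) :
    shiftedParts n Λ j ≤ Λ 0 + (n - 1) := by
  have := hΛ (Nat.zero_le j)
  simp only [shiftedParts]
  omega

lemma coeff_mul_alternant_eq_zero {n : ℕ} {Λ M : ℕ → ℕ} (hΛ : Antitone Λ) (hM : IsPar M)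
    (hMn : parLen M ≤ n) (hlt : Λ 0 < M 0) (q : MvPolynomial (Fin n) ℚ) :
    coeff (Finsupp.equivFunOnFinite.symm (shiftedParts n Λ))
      (q * alternant ℚ (shiftedParts n M)) = 0 := by
  have hn : 0 < n := by
    by_contra h
    have := hM.eq_zero_of_parLen_le (i := 0) (by omega)
    omega
  refine mem_boxIdeal.mp (Ideal.mul_mem_left _ q
    (alternant_mem_boxIdeal (D := Λ 0 + (n - 1)) (i := ⟨0, hn⟩) ?_)) _ (shiftedParts_le hΛ)
  simp only [shiftedParts]
  omega

/-- Structure constants of Schur polynomials as coefficients of `s_M s_N a_δ`. -/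
lemma coeff_schurPS_mul_schurPS {c : (ℕ → ℕ) → (ℕ → ℕ) → (ℕ → ℕ) → ℕ} {n : ℕ} {M N : ℕ → ℕ}
    (hfin : {Λ : ℕ → ℕ | IsPar Λ ∧ c Λ M N ≠ 0}.Finite)
    (hc : schurPS n Finset.univ M * schurPS n Finset.univ N =
        ∑ᶠ Λ ∈ {Λ : ℕ → ℕ | IsPar Λ}, (c Λ M N : ℚ) • schurPS n Finset.univ Λ)
    {Λ : ℕ → ℕ} (hΛ : IsPar Λ) (hΛn : parLen Λ ≤ n) :
    coeff (Finsupp.equivFunOnFinite.symm (shiftedParts n Λ))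
      (schurPS n Finset.univ M * schurPS n Finset.univ N *
        alternant ℚ (shiftedParts n fun _ => 0)) = c Λ M N := by
  rw [hc, finsum_mem_eq_sum_of_subset (t := hfin.toFinset), Finset.sum_mul, coeff_sum]
  · have hterm : ∀ Λ' : ℕ → ℕ, IsPar Λ' → Λ' ≠ Λ →
        coeff (Finsupp.equivFunOnFinite.symm (shiftedParts n Λ))
          ((c Λ' M N : ℚ) • schurPS n Finset.univ Λ' *
            alternant ℚ (shiftedParts n fun _ => 0)) = 0 := by
      intro Λ' hΛ' hne
      by_cases hn : parLen Λ' ≤ n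
      · rw [smul_mul_assoc, schurPS_mul_alternant hΛ' hn, coeff_smul,
          coeff_alternant_of_strictAnti (strictAnti_shiftedParts hΛ'.1)
            (strictAnti_shiftedParts hΛ.1), if_neg, smul_zero]
        exact fun h => hne (shiftedParts_injOn hΛ' hn hΛ hΛn h)
      · rw [schurPS_eq_zero hΛ' (by simpa using hn), smul_zero, zero_mul, coeff_zero]
    rw [Finset.sum_eq_single Λ]
    · rw [smul_mul_assoc, schurPS_mul_alternant hΛ hΛn, coeff_smul,
        coeff_alternant_of_strictAnti (strictAnti_shiftedParts hΛ.1)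
          (strictAnti_shiftedParts hΛ.1)]
      simp
    · exact fun Λ' h hne => hterm Λ' ((Set.Finite.mem_toFinset _).mp h).1 hne
    · intro h
      have : c Λ M N = 0 := by
        by_contra h0
        exact h ((Set.Finite.mem_toFinset _).mpr ⟨hΛ, h0⟩)
      simp [this]
  · rintro Λ' ⟨h, h'⟩
    simp only [Set.Finite.coe_toFinset, Set.mem_ofPred_eq]
    refine ⟨h, fun h0 => h' ?_⟩
    simp [h0]
  · intro Λ' h
    exact ((Set.Finite.mem_toFinset _).mp h).1

lemma map_alternant {n : ℕ} (R : Type*) [CommRing R] (f : ℚ →+* R) (α : Fin n → ℕ) :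
    MvPolynomial.map f (alternant ℚ α) = alternant R α := by
  rw [alternant, alternant, RingHom.map_det]
  congr 1
  ext1 i j
  simp

/-- The expansion of a Jacobi–Trudi determinant of a product of two power series. -/
lemma jacobiTrudi_mul {R : Type*} [CommRing R] [IsDomain R] [CharZero R] (f : ℚ →+* R) {n D : ℕ}
    (G H : PowerSeries R) {Λ : ℕ → ℕ} (hΛ : Antitone Λ) (hD : Λ 0 + (n - 1) ≤ D) :
    jacobiTrudi (G * H) n Λ =
      ∑ M ∈ boxPartitions n D, ∑ N ∈ boxPartitions n D,
        jacobiTrudi G n M * jacobiTrudi H n N *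
          f (coeff (Finsupp.equivFunOnFinite.symm (shiftedParts n Λ))
            (schurPS n Finset.univ M * schurPS n Finset.univ N *
              alternant ℚ (shiftedParts n fun _ => 0))) := by
  have hβ : ∀ j, (Finsupp.equivFunOnFinite.symm (shiftedParts n Λ)) j ≤ D :=
    fun j => (shiftedParts_le hΛ j).trans hD
  have halt : ∀ M ∈ boxPartitions n D, alternant R (shiftedParts n M) =
      MvPolynomial.map f (schurPS n Finset.univ M) * alternant R (shiftedParts n fun _ => 0) := by
    intro M hM
    have hM' := mem_boxPartitions.mp hM
    rw [← map_alternant R f, ← map_alternant R f, ← map_mul, schurPS_mul_alternant hM'.1.1 hM'.1.2]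
  have key : Ideal.Quotient.mk (boxIdeal R n D)
        (boxSeries n D (G * H) * alternant R (shiftedParts n fun _ => 0)) =
      Ideal.Quotient.mk (boxIdeal R n D)
        (∑ M ∈ boxPartitions n D, ∑ N ∈ boxPartitions n D,
          C (jacobiTrudi G n M * jacobiTrudi H n N) *
            MvPolynomial.map f (schurPS n Finset.univ M * schurPS n Finset.univ N *
              alternant ℚ (shiftedParts n fun _ => 0))) := by
    set π := Ideal.Quotient.mk (boxIdeal R n D)
    have hG := mk_boxSeries_mul_alternant n D G
    have hH := mk_boxSeries_mul_alternant n D H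
    rw [Finset.sum_congr rfl fun M hM => by rw [halt M hM]] at hG hH
    calc π (boxSeries n D (G * H) * alternant R (shiftedParts n fun _ => 0))
        = π (boxSeries n D G) *
            π (boxSeries n D H * alternant R (shiftedParts n fun _ => 0)) := by
          rw [map_mul, mk_boxSeries_mul, map_mul, map_mul, mul_assoc]
      _ = ∑ N ∈ boxPartitions n D,
            π (C (jacobiTrudi H n N) * MvPolynomial.map f (schurPS n Finset.univ N)) *
              π (boxSeries n D G * alternant R (shiftedParts n fun _ => 0)) := by
          rw [hH, map_sum, Finset.mul_sum]
          refine Finset.sum_congr rfl fun N _ => ?_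
          simp only [map_mul]
          ring
      _ = _ := by
          rw [hG, map_sum, map_sum]
          simp only [map_sum, Finset.mul_sum]
          rw [Finset.sum_comm]
          refine Finset.sum_congr rfl fun M _ => Finset.sum_congr rfl fun N _ => ?_
          rw [← map_mul]
          congr 1
          simp only [map_mul, map_alternant]
          ring
  rw [Ideal.Quotient.eq, mem_boxIdeal] at key
  have h := key _ hβ
  rw [coeff_sub, sub_eq_zero, coeff_boxSeries_mul_alternant_shiftedParts _ hβ rfl] at h
  rw [h]
  simp only [coeff_sum, coeff_C_mul, coeff_map]

lemma complSeries_filter_mul (n k : ℕ) :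
    complSeries n Finset.univ =
      complSeries n (Finset.univ.filter fun i : Fin n => (i : ℕ) < k) *
        complSeries n (Finset.univ.filter fun i : Fin n => k ≤ (i : ℕ)) := by
  simp only [complSeries, ← not_lt]
  exact (Finset.prod_filter_mul_prod_filter_not _ _ _).symm

theorem stmt3 (c : (ℕ → ℕ) → (ℕ → ℕ) → (ℕ → ℕ) → ℕ)
    (hfin : ∀ M N : ℕ → ℕ, {Λ : ℕ → ℕ | IsPar Λ ∧ c Λ M N ≠ 0}.Finite)
    (hc : ∀ M N : ℕ → ℕ, IsPar M → IsPar N → ∀ n : ℕ,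
      schurPS n Finset.univ M * schurPS n Finset.univ N =
        ∑ᶠ Λ ∈ {Λ : ℕ → ℕ | IsPar Λ}, (c Λ M N : ℚ) • schurPS n Finset.univ Λ) :
    ∀ k l : ℕ, ∀ Λ : ℕ → ℕ, IsPar Λ → parLen Λ ≤ k + l →
      schurPS (k + l) Finset.univ Λ =
        ∑ᶠ M ∈ {M : ℕ → ℕ | IsPar M ∧ parLen M ≤ k},
          ∑ᶠ N ∈ {N : ℕ → ℕ | IsPar N ∧ parLen N ≤ l},
            (c Λ M N : ℚ) •
              (schurPS (k + l) (Finset.univ.filter fun i : Fin (k + l) => (i : ℕ) < k) M *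
                schurPS (k + l) (Finset.univ.filter fun i : Fin (k + l) => k ≤ (i : ℕ)) N) := by
  intro k l Λ hΛ hΛn
  set n := k + l
  set S := Finset.univ.filter fun i : Fin n => (i : ℕ) < k with hS
  set T := Finset.univ.filter fun i : Fin n => k ≤ (i : ℕ) with hT
  set D := Λ 0 + n with hD
  have hScard : S.card = k := by
    simp [hS, n, Fin.card_filter_val_lt]
  have hTcard : T.card = l := by
    have h := Finset.card_filter_add_card_filter_not (s := (Finset.univ : Finset (Fin n)))
      (fun i : Fin n => (i : ℕ) < k)
    simp only [not_lt, Finset.card_univ, Fintype.card_fin] at h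
    rw [← hS, ← hT] at h
    omega
  have hcoeff : ∀ M N, IsPar M → IsPar N →
      coeff (Finsupp.equivFunOnFinite.symm (shiftedParts n Λ))
        (schurPS n Finset.univ M * schurPS n Finset.univ N *
          alternant ℚ (shiftedParts n fun _ => 0)) = (c Λ M N : ℚ) := fun M N hM hN =>
    coeff_schurPS_mul_schurPS (hfin M N) (hc M N hM hN n) hΛ hΛn
  have hcN : ∀ M N, IsPar M → IsPar N → parLen N ≤ n → Λ 0 < N 0 → (c Λ M N : ℚ) = 0 := by
    intro M N hM hN hNn hlt
    rw [← hcoeff M N hM hN, mul_assoc, schurPS_mul_alternant hN hNn,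
      coeff_mul_alternant_eq_zero hΛ.1 hN hNn hlt]
  have hcM : ∀ M N, IsPar M → IsPar N → parLen M ≤ n → Λ 0 < M 0 → (c Λ M N : ℚ) = 0 := by
    intro M N hM hN hMn hlt
    rw [← hcoeff M N hM hN, mul_comm (schurPS n _ M), mul_assoc, schurPS_mul_alternant hM hMn,
      coeff_mul_alternant_eq_zero hΛ.1 hM hMn hlt]
  have hinner : ∀ M, IsPar M → (∑ᶠ N ∈ {N : ℕ → ℕ | IsPar N ∧ parLen N ≤ l},
      (c Λ M N : ℚ) • (schurPS n S M * schurPS n T N)) =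
      ∑ N ∈ boxPartitions n D, (c Λ M N : ℚ) • (schurPS n S M * schurPS n T N) := by
    intro M hM
    refine finsum_mem_eq_sum_of_inter_support_eq _ ?_
    ext N
    simp only [Set.mem_inter_iff, Set.mem_ofPred_eq, Function.mem_support, Finset.mem_coe,
      mem_boxPartitions]
    refine and_congr_left fun hne => ⟨fun ⟨hN, hl⟩ => ⟨⟨hN, by omega⟩, ?_⟩,
      fun ⟨⟨hN, hn⟩, _⟩ => ⟨hN, ?_⟩⟩
    · by_contra hlt
      exact hne (by rw [hcN M N hM hN (by omega) (by omega), zero_smul])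
    · by_contra hlt
      exact hne (by rw [schurPS_eq_zero (S := T) hN (by omega), mul_zero, smul_zero])
  have houter : (∑ᶠ M ∈ {M : ℕ → ℕ | IsPar M ∧ parLen M ≤ k},
      ∑ᶠ N ∈ {N : ℕ → ℕ | IsPar N ∧ parLen N ≤ l},
        (c Λ M N : ℚ) • (schurPS n S M * schurPS n T N)) =
      ∑ M ∈ boxPartitions n D, ∑ N ∈ boxPartitions n D,
        (c Λ M N : ℚ) • (schurPS n S M * schurPS n T N) := by
    rw [finsum_mem_congr rfl fun M hM => hinner M hM.1]
    refine finsum_mem_eq_sum_of_inter_support_eq _ ?_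
    ext M
    simp only [Set.mem_inter_iff, Set.mem_ofPred_eq, Function.mem_support, Finset.mem_coe,
      mem_boxPartitions]
    refine and_congr_left fun hne => ⟨fun ⟨hM, hk⟩ => ⟨⟨hM, by omega⟩, ?_⟩,
      fun ⟨⟨hM, hn⟩, _⟩ => ⟨hM, ?_⟩⟩
    · by_contra hlt
      refine hne (Finset.sum_eq_zero fun N hN => ?_)
      rw [hcM M N hM (mem_boxPartitions.mp hN).1.1 (by omega) (by omega), zero_smul]
    · by_contra hlt
      refine hne (Finset.sum_eq_zero fun N _ => ?_)
      rw [schurPS_eq_zero (S := S) hM (by omega), zero_mul, smul_zero]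
  rw [houter, schurPS_eq_jacobiTrudi _ hΛ hΛn, complSeries_filter_mul n k,
    jacobiTrudi_mul C (D := D) _ _ hΛ.1 (by omega)]
  refine Finset.sum_congr rfl fun M hM => Finset.sum_congr rfl fun N hN => ?_
  obtain ⟨⟨hM, hMn⟩, -⟩ := mem_boxPartitions.mp hM
  obtain ⟨⟨hN, hNn⟩, -⟩ := mem_boxPartitions.mp hN
  rw [hcoeff M N hM hN, schurPS_eq_jacobiTrudi S hM hMn, schurPS_eq_jacobiTrudi T hN hNn,
    smul_eq_C_mul, mul_comm]
end
end
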